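/- (Probabilistic completeness of geometric RRT.) Consider GEOM-RRT with state space [0,1]^d ⊂ ℝ^d, free space F ⊆ [0,1]^d, initial point x_init ∈ F, steering parameter η > 0, and a nearest-neighbor selector NN. Assume there exists a continuous path π : [0,1] → F of finite total variation with π(0) = x_init and π(1) = x_goal, having clearance δ_clear > 0 (i.e., B_{δ_clear}(π(t)) ⊆ F for all t ∈ [0,1]), and assume δ_goal > 0 is such that B_{δ_goal}(x_goal) ⊆ F. Let μ be the countably infinite product over ℕ of the uniform probability measure on [0,1]^d, so that ω = (ω_0, ω_1, …) is a sequence of independent uniformly distributed samples. Then there exist constants a, b > 0 such that for every k ∈ ℕ, the μ-(outer) measure of the set of sample sequences ω for which V_k(ω) contains no vertex v with ‖v − x_goal‖ < δ_goal is at most a·e^{−bk}. -/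

import Mathlib

/-!
Choose `r` with `5 * r ≤ min η (min δclear δgoal)` and points `x 0, …, x m` on the path, spaced
less than `r` apart, from `xinit` to `xgoal` (uniform continuity of the path).

Geometric step (`geomRRT_step`): if the tree has a vertex in `ball (x j) r` and the next sample
lies in `ball (x (j + 1)) r`, then the sample itself becomes a vertex. Indeed the nearest vertex
is within `3 * r ≤ η` of the sample, so steering does not truncate, and within `4 * r ≤ δclear`
of `x (j + 1)`, so the connecting segment stays in the clearance ball, which is convex.

Probabilistic step: split the first `m * L` indices, with `L = k / m`, into `m` consecutive blocks
of length `L`. If for every `j < m` some sample of block `j` lies in `ball (x (j + 1)) r`, then the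
goal region is reached. So failure is contained in the union over `j` of the events "all samples
of block `j` miss `ball (x (j + 1)) r`". These are cylinder events of probability at most
`exp (-p) ^ L`, where `p` is the common probability of the balls of radius `r` inside the cube.
Since failure is covered by cylinders, no measurability of the selector `NN` is needed.
-/

open Metric MeasureTheory

attribute [local instance] Classical.propDecidable

/-- The GEOM-RRT vertex sets: `V 0 = {x_init}`; at step `i` the sample `ω i` is drawn, its
nearest neighbor `x_near` in the current vertex set is computed via the selector `NN`, the
steering step produces `x_new` at distance at most `η` from `x_near` towards `ω i`, and
`x_new` is added if the segment from `x_near` to `x_new` is collision free. -/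
noncomputable def geomRRT (d : ℕ) (F : Set (EuclideanSpace ℝ (Fin d)))
    (xinit : EuclideanSpace ℝ (Fin d)) (η : ℝ)
    (NN : Finset (EuclideanSpace ℝ (Fin d)) → EuclideanSpace ℝ (Fin d) →
      EuclideanSpace ℝ (Fin d))
    (ω : ℕ → EuclideanSpace ℝ (Fin d)) : ℕ → Finset (EuclideanSpace ℝ (Fin d))
  | 0 => {xinit}
  | i + 1 =>
      let V := geomRRT d F xinit η NN ω i
      let xnear := NN V (ω i)
      let xnew := if ω i = xnear then xnear
        else xnear + (min 1 (η / ‖ω i - xnear‖)) • (ω i - xnear)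
      if segment ℝ xnear xnew ⊆ F then insert xnew V else V

/-- The unit cube `[0,1]^d`, the state space of geometric RRT. -/
def unitCube (d : ℕ) : Set (EuclideanSpace ℝ (Fin d)) :=
  {x | ∀ i, x i ∈ Set.Icc (0 : ℝ) 1}

/-- The uniform probability measure on the unit cube `[0,1]^d`. -/
noncomputable def uniformCube (d : ℕ) : Measure (EuclideanSpace ℝ (Fin d)) :=
  (volume (unitCube d))⁻¹ • volume.restrict (unitCube d)

section GeomRRT

variable {d : ℕ} {F : Set (EuclideanSpace ℝ (Fin d))} {xinit : EuclideanSpace ℝ (Fin d)} {η : ℝ}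
  {NN : Finset (EuclideanSpace ℝ (Fin d)) → EuclideanSpace ℝ (Fin d) → EuclideanSpace ℝ (Fin d)}
  {ω : ℕ → EuclideanSpace ℝ (Fin d)}

lemma geomRRT_mono : Monotone (geomRRT d F xinit η NN ω) := by
  refine monotone_nat_of_le_succ fun n => ?_
  simp only [geomRRT]
  split_ifs
  · exact Finset.subset_insert _ _
  · exact subset_rfl
  · exact Finset.subset_insert _ _
  · exact subset_rfl

/-- If the tree has a vertex near `y`, and the next sample lies near a point `z` with clearance
close to `y`, then this sample is added to the tree without truncation. -/
lemma geomRRT_step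
    (hNN : ∀ (S : Finset (EuclideanSpace ℝ (Fin d))), S.Nonempty →
      ∀ q, NN S q ∈ S ∧ ∀ z ∈ S, ‖NN S q - q‖ ≤ ‖z - q‖)
    {y z v : EuclideanSpace ℝ (Fin d)} {r δ : ℝ} (hrη : 5 * r ≤ η) (hrδ : 5 * r ≤ δ)
    (hz : closedBall z δ ⊆ F) (hyz : dist y z < r) {i : ℕ}
    (hv : v ∈ geomRRT d F xinit η NN ω i) (hvy : dist v y < r) (hω : dist (ω i) z < r) :
    ω i ∈ geomRRT d F xinit η NN ω (i + 1) := by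
  obtain ⟨-, hmin⟩ := hNN _ ⟨v, hv⟩ (ω i)
  have hr : 0 < r := dist_nonneg.trans_lt hyz
  set xnear := NN (geomRRT d F xinit η NN ω i) (ω i) with hxnear
  have hnear : dist xnear (ω i) < 3 * r := by
    have h1 := hmin v hv
    rw [← dist_eq_norm, ← dist_eq_norm] at h1
    have h2 := dist_triangle4 v y z (ω i)
    rw [dist_comm z] at h2
    linarith
  have hnear' : dist xnear z ≤ δ := by
    have := dist_triangle xnear (ω i) z
    linarith
  have hnew : (if ω i = xnear then xnear
      else xnear + (min 1 (η / ‖ω i - xnear‖)) • (ω i - xnear)) = ω i := by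
    split_ifs with h
    · exact h.symm
    · have hpos : 0 < ‖ω i - xnear‖ := norm_pos_iff.2 (sub_ne_zero.2 h)
      have hle : ‖ω i - xnear‖ ≤ η := by
        rw [← dist_eq_norm, dist_comm]
        linarith
      rw [min_eq_left ((one_le_div hpos).2 hle)]
      simp
  have hseg : segment ℝ xnear (ω i) ⊆ F :=
    ((convex_closedBall z δ).segment_subset (mem_closedBall.2 hnear')
      (mem_closedBall.2 (by linarith))).trans hz
  simp only [geomRRT]
  rw [← hxnear, hnew, if_pos hseg]
  exact Finset.mem_insert_self _ _

/-- If in each of `m` consecutive blocks of `L` iterations some sample hits the ball around the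
next waypoint, then the tree reaches the ball around the last waypoint. -/
lemma geomRRT_reach
    (hNN : ∀ (S : Finset (EuclideanSpace ℝ (Fin d))), S.Nonempty →
      ∀ q, NN S q ∈ S ∧ ∀ z ∈ S, ‖NN S q - q‖ ≤ ‖z - q‖)
    {x : ℕ → EuclideanSpace ℝ (Fin d)} {m L : ℕ} {r δ : ℝ} (hr : 0 < r)
    (hrη : 5 * r ≤ η) (hrδ : 5 * r ≤ δ) (hx0 : x 0 = xinit)
    (hclear : ∀ j ≤ m, closedBall (x j) δ ⊆ F)
    (hx : ∀ j < m, dist (x j) (x (j + 1)) < r)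
    (hhit : ∀ j < m, ∃ i ∈ Finset.Ico (j * L) ((j + 1) * L), ω i ∈ ball (x (j + 1)) r) :
    ∀ j ≤ m, ∃ v ∈ geomRRT d F xinit η NN ω (j * L), dist v (x j) < r := by
  intro j
  induction j with
  | zero =>
    intro _
    exact ⟨xinit, by simp [geomRRT], by simpa [hx0] using hr⟩
  | succ j ih =>
    intro hj
    obtain ⟨v, hv, hvx⟩ := ih (by omega)
    obtain ⟨i, hi, hωi⟩ := hhit j hj
    rw [Finset.mem_Ico] at hi
    exact ⟨ω i, geomRRT_mono hi.2 (geomRRT_step hNN hrη hrδ (hclear _ hj) (hx j hj)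
      (geomRRT_mono hi.1 hv) hvx hωi), hωi⟩

end GeomRRT

/-- All balls of radius `r` inside the cube have the same positive probability `p`, hence are
missed by a sample with probability `1 - p ≤ exp (-p)`. -/
lemma uniformCube_compl_ball_le (d : ℕ) [IsProbabilityMeasure (uniformCube d)] {r : ℝ}
    (hr : 0 < r) :
    ∃ p : ℝ, 0 < p ∧ ∀ x, ball x r ⊆ unitCube d →
      uniformCube d (ball x r)ᶜ ≤ ENNReal.ofReal (Real.exp (-p)) := by
  have h1 : uniformCube d Set.univ = 1 := measure_univ
  have h0 : volume (unitCube d) ≠ 0 := by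
    intro h
    simp [uniformCube, Measure.restrict_eq_zero.2 h] at h1
  have htop : volume (unitCube d) ≠ ⊤ := by
    intro h
    simp [uniformCube, h] at h1
  have hball : ∀ x, ball x r ⊆ unitCube d → uniformCube d (ball x r) =
      (volume (unitCube d))⁻¹ * volume (ball (0 : EuclideanSpace ℝ (Fin d)) r) := by
    intro x hx
    rw [uniformCube, Measure.smul_apply, Measure.restrict_apply measurableSet_ball,
      Set.inter_eq_left.2 hx, Measure.addHaar_ball_center, smul_eq_mul]
  set P := (volume (unitCube d))⁻¹ * volume (ball (0 : EuclideanSpace ℝ (Fin d)) r) with hP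
  have hP0 : P ≠ 0 := mul_ne_zero (ENNReal.inv_ne_zero.2 htop) (measure_ball_pos _ _ hr).ne'
  have hPtop : P ≠ ⊤ := ENNReal.mul_ne_top (ENNReal.inv_ne_top.2 h0) measure_ball_lt_top.ne
  refine ⟨P.toReal, ENNReal.toReal_pos hP0 hPtop, fun x hx => ?_⟩
  rw [prob_compl_eq_one_sub measurableSet_ball, hball x hx, ← ENNReal.ofReal_toReal hPtop,
    ← ENNReal.ofReal_one, ← ENNReal.ofReal_sub _ ENNReal.toReal_nonneg,
    ENNReal.toReal_ofReal ENNReal.toReal_nonneg]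
  apply ENNReal.ofReal_le_ofReal
  have := Real.add_one_le_exp (-P.toReal)
  linarith

/-- A path continuous on `[0, 1]` can be sampled at `j / m` with steps shorter than `r`. -/
lemma exists_waypoints {E : Type*} [PseudoMetricSpace E] {π : ℝ → E}
    (hπ : ContinuousOn π (Set.Icc 0 1)) {r : ℝ} (hr : 0 < r) :
    ∃ m : ℕ, 0 < m ∧ ∀ j < m, dist (π ((j : ℝ) / m)) (π (((j + 1 : ℕ) : ℝ) / m)) < r := by
  obtain ⟨ε, hε, h⟩ := Metric.uniformContinuousOn_iff.1
    (isCompact_Icc.uniformContinuousOn_of_continuous hπ) r hr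
  obtain ⟨n, hn⟩ := exists_nat_one_div_lt hε
  refine ⟨n + 1, n.succ_pos, fun j hj => ?_⟩
  have hn0 : (0 : ℝ) < ((n + 1 : ℕ) : ℝ) := by positivity
  have hjn : ((j + 1 : ℕ) : ℝ) ≤ ((n + 1 : ℕ) : ℝ) := by exact_mod_cast hj
  refine h _ ⟨by positivity, ?_⟩ _ ⟨by positivity, ?_⟩ ?_
  · rw [div_le_one hn0]
    push_cast at hjn ⊢
    linarith
  · rwa [div_le_one hn0]
  · rw [dist_comm, Real.dist_eq, ← sub_div]
    push_cast
    rw [add_sub_cancel_left, abs_of_pos (by positivity)]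
    exact hn

/-- probabilistic completeness of geometric RRT.  If a continuous path of finite
length with positive clearance connects `x_init` to `x_goal`, then under independent uniform
samples (a measure `μ` on sample sequences whose finite-dimensional cylinder probabilities
are products of uniform measures on the cube) the probability that GEOM-RRT has not reached
the goal region after `k` iterations decays exponentially in `k`. -/
theorem geomRRT_probabilistically_complete (d : ℕ) (_hd : 1 ≤ d)
    (F : Set (EuclideanSpace ℝ (Fin d))) (hF : F ⊆ unitCube d)
    (xinit : EuclideanSpace ℝ (Fin d)) (hinit : xinit ∈ F)
    (η : ℝ) (hη : 0 < η)
    (NN : Finset (EuclideanSpace ℝ (Fin d)) → EuclideanSpace ℝ (Fin d) →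
      EuclideanSpace ℝ (Fin d))
    (hNN : ∀ (S : Finset (EuclideanSpace ℝ (Fin d))), S.Nonempty →
      ∀ q, NN S q ∈ S ∧ ∀ z ∈ S, ‖NN S q - q‖ ≤ ‖z - q‖)
    (xgoal : EuclideanSpace ℝ (Fin d)) (δgoal : ℝ) (hδgoal : 0 < δgoal)
    (hgoal : closedBall xgoal δgoal ⊆ F)
    (π : ℝ → EuclideanSpace ℝ (Fin d))
    (hπcont : ContinuousOn π (Set.Icc 0 1))
    (hπF : ∀ t ∈ Set.Icc (0 : ℝ) 1, π t ∈ F)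
    (hπlen : eVariationOn π (Set.Icc 0 1) ≠ ⊤)
    (hπ0 : π 0 = xinit) (hπ1 : π 1 = xgoal)
    (δclear : ℝ) (hδclear : 0 < δclear)
    (hclear : ∀ t ∈ Set.Icc (0 : ℝ) 1, closedBall (π t) δclear ⊆ F)
    (μ : Measure (ℕ → EuclideanSpace ℝ (Fin d))) [IsProbabilityMeasure μ]
    (hμ : ∀ (s : Finset ℕ) (B : ℕ → Set (EuclideanSpace ℝ (Fin d))),
      (∀ i ∈ s, MeasurableSet (B i)) →
      μ {ω | ∀ i ∈ s, ω i ∈ B i} = ∏ i ∈ s, uniformCube d (B i)) :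
    ∃ a b : ℝ, 0 < a ∧ 0 < b ∧ ∀ k : ℕ,
      μ {ω | ∀ v ∈ geomRRT d F xinit η NN ω k, ¬ ‖v - xgoal‖ < δgoal} ≤
        ENNReal.ofReal (a * Real.exp (-b * k)) := by
  have hprob : IsProbabilityMeasure (uniformCube d) :=
    ⟨by simpa using (hμ {0} (fun _ => Set.univ) (by simp)).symm⟩
  obtain ⟨r, hr, hrη, hrδ, hrg⟩ :
      ∃ r : ℝ, 0 < r ∧ 5 * r ≤ η ∧ 5 * r ≤ δclear ∧ 5 * r ≤ δgoal := by
    refine ⟨min η (min δclear δgoal) / 5, by positivity, ?_⟩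
    rw [mul_div_cancel₀ _ (by norm_num : (5 : ℝ) ≠ 0)]
    simp
  obtain ⟨m, hm, hstep⟩ := exists_waypoints hπcont hr
  obtain ⟨p, hp, hmiss⟩ := uniformCube_compl_ball_le d hr
  have hm' : (0 : ℝ) < m := by exact_mod_cast hm
  set x : ℕ → EuclideanSpace ℝ (Fin d) := fun j => π ((j : ℝ) / m) with hxdef
  have hxclear : ∀ j ≤ m, closedBall (x j) δclear ⊆ F := fun j hj =>
    hclear _ ⟨by positivity, by rw [div_le_one hm']; exact_mod_cast hj⟩
  have hx0 : x 0 = xinit := by simp [hxdef, hπ0]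
  have hxm : x m = xgoal := by simp [hxdef, div_self hm'.ne', hπ1]
  have hxball : ∀ j ≤ m, ball (x j) r ⊆ unitCube d := fun j hj =>
    (ball_subset_closedBall.trans
      (closedBall_subset_closedBall (by linarith))).trans ((hxclear j hj).trans hF)
  refine ⟨m * Real.exp p, p / m, by positivity, by positivity, fun k => ?_⟩
  set L := k / m with hL
  have hsub : {ω | ∀ v ∈ geomRRT d F xinit η NN ω k, ¬ ‖v - xgoal‖ < δgoal} ⊆
      ⋃ j ∈ Finset.range m,
        {ω : ℕ → EuclideanSpace ℝ (Fin d) |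
          ∀ i ∈ Finset.Ico (j * L) ((j + 1) * L), ω i ∈ (ball (x (j + 1)) r)ᶜ} := by
    intro ω hω
    by_contra hcon
    simp only [Set.mem_iUnion, Finset.mem_range, Set.mem_ofPred_eq, Set.mem_compl_iff,
      not_exists, not_forall, not_not] at hcon
    obtain ⟨v, hv, hvx⟩ := geomRRT_reach (ω := ω) hNN hr hrη hrδ hx0 hxclear hstep
      (fun j hj => by
        obtain ⟨i, hi, hi'⟩ := hcon j hj
        exact ⟨i, hi, hi'⟩) m le_rfl
    refine hω v (geomRRT_mono (Nat.mul_div_le k m) hv) ?_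
    rw [hxm, dist_eq_norm] at hvx
    linarith
  have hcyl : ∀ j ∈ Finset.range m,
      μ {ω : ℕ → EuclideanSpace ℝ (Fin d) |
        ∀ i ∈ Finset.Ico (j * L) ((j + 1) * L), ω i ∈ (ball (x (j + 1)) r)ᶜ} ≤
      ENNReal.ofReal (Real.exp (-p)) ^ L := by
    intro j hj
    rw [hμ _ (fun _ => (ball (x (j + 1)) r)ᶜ) (fun _ _ => measurableSet_ball.compl),
      Finset.prod_const, Nat.card_Ico, Nat.succ_mul, Nat.add_sub_cancel_left]
    exact pow_le_pow_left' (hmiss _ (hxball _ (Finset.mem_range.1 hj))) L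
  -- The factor `exp p` in `a` pays for the rounding in `L = k / m`, since `k / m ≤ L + 1`.
  have hkL : (k : ℝ) / m ≤ L + 1 := by
    rw [div_le_iff₀ hm']
    have := (Nat.lt_div_mul_add (a := k) hm).le
    have h2 : (k : ℝ) ≤ ((k / m * m + m : ℕ) : ℝ) := by exact_mod_cast this
    push_cast at h2
    rw [← hL] at h2
    linarith
  calc μ {ω | ∀ v ∈ geomRRT d F xinit η NN ω k, ¬ ‖v - xgoal‖ < δgoal}
      ≤ ∑ j ∈ Finset.range m, ENNReal.ofReal (Real.exp (-p)) ^ L :=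
        (measure_mono hsub).trans ((measure_biUnion_finset_le _ _).trans
          (Finset.sum_le_sum hcyl))
    _ = ENNReal.ofReal (m * Real.exp (-p * L)) := by
        rw [Finset.sum_const, Finset.card_range, nsmul_eq_mul, ENNReal.ofReal_mul hm'.le,
          ENNReal.ofReal_natCast, ← ENNReal.ofReal_pow (Real.exp_nonneg _), ← Real.exp_nat_mul,
          mul_comm (L : ℝ)]
    _ ≤ ENNReal.ofReal (m * Real.exp p * Real.exp (-(p / m) * k)) := by
        apply ENNReal.ofReal_le_ofReal
        rw [mul_assoc, ← Real.exp_add]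
        gcongr
        have h3 := mul_le_mul_of_nonneg_left hkL hp.le
        have h4 : -(p / m) * k = -(p * (k / m)) := by ring
        rw [h4]
        linarith
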